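/- (Corollary 2: identifiability under Condition (C2).) Let G be a directed acyclic graph on V = 𝐗 ∪ 𝐘, unidirectional from 𝐗 to 𝐘, and let the joint distribution of random variables (Z_v)_{v ∈ V} be Markov and faithful to G. Assume Condition (C2): there exist distinct Yk, Yl ∈ 𝐘 and S ⊆ 𝐘 \ {Yk, Yl} such that Z_{Yk} and Z_{Yl} are conditionally dependent given σ((Z_s)_{s ∈ S}) but conditionally independent given σ((Z_s)_{s ∈ S ∪ 𝐗}). Then there exists no directed acyclic graph G' on V containing no edge (x, y) with x ∈ 𝐗 and y ∈ 𝐘 (i.e. unidirectional from 𝐘 to 𝐗) to which the joint distribution of (Z_v)_{v ∈ V} is Markov and faithful; hence the causal direction 𝐗 → 𝐘 is identifiable from the observational distribution. -/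

import Mathlib

open MeasureTheory ProbabilityTheory

namespace VecCI

variable {V : Type*}

/-- Undirected adjacency of the edge relation `E`. -/
def Adj (E : V → V → Prop) (u v : V) : Prop := E u v ∨ E v u

/-- `p` is a path from `a` to `b`: a list of pairwise distinct vertices, starting at `a`,
ending at `b`, with at least two vertices, consecutive vertices being adjacent. -/
def IsPath (E : V → V → Prop) (p : List V) (a b : V) : Prop :=
  p.Nodup ∧ 2 ≤ p.length ∧ p.head? = some a ∧ p.getLast? = some b ∧ p.Chain' (Adj E)

/-- Index `i` is an interior position of the path `p`. -/
def Interior (p : List V) (i : ℕ) : Prop := 0 < i ∧ i + 1 < p.length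

/-- The vertex at interior position `i` of `p` is a collider: both adjacent edges point into it. -/
def ColliderAt (E : V → V → Prop) (p : List V) (i : ℕ) : Prop :=
  Interior p i ∧
    ∃ u v w, p[i - 1]? = some u ∧ p[i]? = some v ∧ p[i + 1]? = some w ∧ E u v ∧ E w v

/-- The vertex at interior position `i` of `p` is a non-collider. -/
def NonColliderAt (E : V → V → Prop) (p : List V) (i : ℕ) : Prop :=
  Interior p i ∧ ¬ ColliderAt E p i

/-- `d` is a descendant of `c`: `d = c` or there is a directed path from `c` to `d`. -/
def Descendant (E : V → V → Prop) (c d : V) : Prop := Relation.ReflTransGen E c d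

/-- A set `S` blocks a path `p` if some interior non-collider of `p` lies in `S`, or some
collider of `p` has no descendant in `S`. -/
def Blocked (E : V → V → Prop) (S : Set V) (p : List V) : Prop :=
  (∃ i v, NonColliderAt E p i ∧ p[i]? = some v ∧ v ∈ S) ∨
  (∃ i v, ColliderAt E p i ∧ p[i]? = some v ∧ ∀ d, Descendant E v d → d ∉ S)

/-- `S` d-separates `a` and `b`: every path between them is blocked by `S`. -/
def DSep (E : V → V → Prop) (S : Set V) (a b : V) : Prop :=
  ∀ p : List V, IsPath E p a b → Blocked E S p

/-- `E` admits no directed cycle. -/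
def Acyclic (E : V → V → Prop) : Prop := ∀ v, ¬ Relation.TransGen E v v

/-- `E` has no edge from `Ys` to `Xs`. -/
def Unidirectional (E : V → V → Prop) (Xs Ys : Set V) : Prop :=
  ∀ x ∈ Xs, ∀ y ∈ Ys, ¬ E y x


/-- The σ-algebra generated by the family of random variables `(Z s)_{s ∈ S}`. -/
def sigmaOf {Ω : Type*} (Z : V → Ω → ℝ) (S : Set V) : MeasurableSpace Ω :=
  ⨆ s ∈ S, MeasurableSpace.comap (Z s) inferInstance

/-- `Z a` and `Z b` are conditionally independent given the σ-algebra generated by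
`(Z s)_{s ∈ S}` (for `S = ∅` this is conditioning on the trivial σ-algebra, i.e.
unconditional independence). -/
def CondIndepGiven {Ω : Type*} [mΩ : MeasurableSpace Ω] [StandardBorelSpace Ω]
    (μ : Measure Ω) [IsFiniteMeasure μ] (Z : V → Ω → ℝ) (hZ : ∀ v, Measurable (Z v))
    (S : Set V) (a b : V) : Prop :=
  CondIndepFun (sigmaOf Z S) (iSup₂_le fun s _ => measurable_iff_comap_le.mp (hZ s))
    (Z a) (Z b) μ

/-- The joint distribution of `(Z v)_{v ∈ V}` is Markov and faithful to the graph `E`: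
for all distinct `a`, `b` and every `S ⊆ V \ {a, b}`, `S` d-separates `a` and `b` in `E`
iff `Z a` and `Z b` are conditionally independent given `σ((Z s)_{s ∈ S})`. -/
def MarkovFaithful {Ω : Type*} [mΩ : MeasurableSpace Ω] [StandardBorelSpace Ω]
    (E : V → V → Prop) (μ : Measure Ω) [IsFiniteMeasure μ]
    (Z : V → Ω → ℝ) (hZ : ∀ v, Measurable (Z v)) : Prop :=
  ∀ a b : V, a ≠ b → ∀ S : Set V, a ∉ S → b ∉ S →
    (DSep E S a b ↔ CondIndepGiven μ Z hZ S a b)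

/-!
If no edge of `E'` leaves `Xs`, a path that enters `Xs` from its complement does so along an
edge pointing into `Xs`, and leaves it again along an edge traversed against its direction.
In between the orientation has to switch, and it does so at a collider in `Xs`. The descendants
of that collider stay in `Xs`, so no set disjoint from `Xs` can open the path. Adding `Xs` to
such a conditioning set therefore never creates a d-separation between vertices outside `Xs`,
and by the Markov and faithfulness properties it never creates a conditional independence.
-/

section Sink

variable {E : V → V → Prop} {A S : Set V} {p : List V} {a b u v w : V}

theorem Unidirectional.mem_of_edge (hA : Unidirectional E Aᶜ A) (huv : E u v) (hu : u ∈ A) :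
    v ∈ A :=
  not_not.mp fun hv => hA v hv u hu huv

theorem Unidirectional.mem_of_descendant (hA : Unidirectional E Aᶜ A) (huv : Descendant E u v)
    (hu : u ∈ A) : v ∈ A := by
  induction huv with
  | refl => exact hu
  | tail _ hedge ih => exact hA.mem_of_edge hedge ih

/-- Some collider on the path `p` lies in `A`. If no edge leaves `A`, such a collider blocks `p`
given any set disjoint from `A`. -/
def HasColliderIn (E : V → V → Prop) (A : Set V) (p : List V) : Prop :=
  ∃ i v, ColliderAt E p i ∧ p[i]? = some v ∧ v ∈ A

theorem hasColliderIn_cons_cons_cons (huv : E u v) (hwv : E w v) (hv : v ∈ A) :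
    HasColliderIn E A (u :: v :: w :: p) :=
  ⟨1, v, ⟨⟨Nat.one_pos, by simp⟩, u, v, w, rfl, rfl, rfl, huv, hwv⟩, rfl, hv⟩

theorem HasColliderIn.cons (h : HasColliderIn E A p) (u : V) : HasColliderIn E A (u :: p) := by
  obtain ⟨_ | i, v, ⟨⟨hpos, hlt⟩, hcollider⟩, hv, hvA⟩ := h
  · exact absurd hpos (lt_irrefl 0)
  · exact ⟨i + 2, v, ⟨⟨Nat.succ_pos _, Nat.succ_lt_succ hlt⟩, hcollider⟩, hv, hvA⟩

theorem HasColliderIn.blocked (h : HasColliderIn E A p) (hA : Unidirectional E Aᶜ A)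
    (hS : Disjoint S A) : Blocked E S p := by
  obtain ⟨i, v, hcollider, hv, hvA⟩ := h
  exact Or.inr ⟨i, v, hcollider, hv, fun d hd hdS =>
    Set.disjoint_left.mp hS hdS (hA.mem_of_descendant hd hvA)⟩

theorem hasColliderIn_of_edge_into (hA : Unidirectional E Aᶜ A)
    (hchain : (u :: v :: p).IsChain (Adj E)) (hlast : (u :: v :: p).getLast? = some b)
    (hb : b ∉ A) (huv : E u v) (hv : v ∈ A) : HasColliderIn E A (u :: v :: p) := by
  induction p generalizing u v with
  | nil => exact absurd (Option.some.inj hlast ▸ hv) hb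
  | cons w p ih =>
    rw [List.isChain_cons_cons] at hchain
    rcases (List.isChain_cons_cons.mp hchain.2).1 with hvw | hwv
    · exact (ih hchain.2 hlast hvw (hA.mem_of_edge hvw hv)).cons u
    · exact hasColliderIn_cons_cons_cons huv hwv hv

theorem hasColliderIn_of_mem (hA : Unidirectional E Aᶜ A)
    (hchain : (a :: p).IsChain (Adj E)) (hlast : (a :: p).getLast? = some b)
    (ha : a ∉ A) (hb : b ∉ A) (hvp : v ∈ p) (hv : v ∈ A) : HasColliderIn E A (a :: p) := by
  induction p generalizing a with
  | nil => exact absurd hvp List.not_mem_nil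
  | cons c p ih =>
    obtain ⟨hac, htail⟩ := List.isChain_cons_cons.mp hchain
    by_cases hc : c ∈ A
    · have hedge : E a c := hac.resolve_right fun hca => ha (hA.mem_of_edge hca hc)
      exact hasColliderIn_of_edge_into hA hchain hlast hb hedge hc
    · have hvp : v ∈ p := (List.mem_cons.mp hvp).resolve_left fun hvc => hc (hvc ▸ hv)
      exact (ih htail hlast hc hvp).cons a

theorem IsPath.hasColliderIn (hp : IsPath E p a b) (hA : Unidirectional E Aᶜ A)
    (ha : a ∉ A) (hb : b ∉ A) (hvp : v ∈ p) (hv : v ∈ A) : HasColliderIn E A p := by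
  obtain ⟨-, -, hhead, hlast, hchain⟩ := hp
  obtain ⟨q, rfl⟩ := List.head?_eq_some_iff.mp hhead
  have hvq : v ∈ q := (List.mem_cons.mp hvp).resolve_left fun hva => ha (hva ▸ hv)
  exact hasColliderIn_of_mem hA hchain hlast ha hb hvq hv

theorem Blocked.of_union (h : Blocked E (S ∪ A) p) (hpA : ∀ v ∈ p, v ∉ A) : Blocked E S p := by
  rcases h with ⟨i, v, hnoncollider, hv, hvSA⟩ | ⟨i, v, hcollider, hv, hdesc⟩
  · exact Or.inl ⟨i, v, hnoncollider, hv, hvSA.resolve_right (hpA v (List.mem_of_getElem? hv))⟩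
  · exact Or.inr ⟨i, v, hcollider, hv, fun d hd hdS => hdesc d hd (Or.inl hdS)⟩

theorem DSep.of_union (h : DSep E (S ∪ A) a b) (hA : Unidirectional E Aᶜ A)
    (hS : Disjoint S A) (ha : a ∉ A) (hb : b ∉ A) : DSep E S a b := by
  intro p hp
  by_cases hpA : ∃ v ∈ p, v ∈ A
  · obtain ⟨v, hvp, hv⟩ := hpA
    exact (hp.hasColliderIn hA ha hb hvp hv).blocked hA hS
  · push Not at hpA
    exact (h p hp).of_union hpA

end Sink

theorem stmt_7_general {E : V → V → Prop} {Xs : Set V} (hE : Unidirectional E Xsᶜ Xs)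
    {Ω : Type*} [MeasurableSpace Ω] [StandardBorelSpace Ω]
    (μ : Measure Ω) [IsFiniteMeasure μ] (Z : V → Ω → ℝ) (hZ : ∀ v, Measurable (Z v))
    {Yk Yl : V} (hYk : Yk ∈ Xsᶜ) (hYl : Yl ∈ Xsᶜ) (hne : Yk ≠ Yl)
    {S : Set V} (hS : S ⊆ Xsᶜ \ {Yk, Yl})
    (hcd : ¬ CondIndepGiven μ Z hZ S Yk Yl)
    (hci : CondIndepGiven μ Z hZ (S ∪ Xs) Yk Yl) :
    ¬ MarkovFaithful E μ Z hZ := by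
  intro hMF
  have hSX : Disjoint S Xs := Set.disjoint_left.mpr fun _ hs => (hS hs).1
  have hkS : Yk ∉ S := fun h => (hS h).2 (Or.inl rfl)
  have hlS : Yl ∉ S := fun h => (hS h).2 (Or.inr rfl)
  have hsepSX : DSep E (S ∪ Xs) Yk Yl :=
    (hMF Yk Yl hne _ (not_or.mpr ⟨hkS, hYk⟩) (not_or.mpr ⟨hlS, hYl⟩)).mpr hci
  have hsepS : DSep E S Yk Yl := hsepSX.of_union hE hSX hYk hYl
  exact hcd ((hMF Yk Yl hne S hkS hlS).mp hsepS)

/-- Corollary 2, identifiability under (C2): if conditioning on `Xs`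
deletes a dependence between two vertices of `Ys`, then the observational distribution
is Markov and faithful to no DAG that is unidirectional from `Ys` to `Xs`; hence the
causal direction `Xs → Ys` is identifiable. -/
theorem stmt_7 {V : Type*} [Fintype V] (E : V → V → Prop) (Xs Ys : Set V)
    (hcover : Xs ∪ Ys = Set.univ) (hdisj : Disjoint Xs Ys)
    (hXne : Xs.Nonempty) (hYne : Ys.Nonempty)
    (hirr : Irreflexive E) (hacyc : Acyclic E)
    (huni : Unidirectional E Xs Ys)
    {Ω : Type*} [mΩ : MeasurableSpace Ω] [StandardBorelSpace Ω]
    (μ : Measure Ω) [IsProbabilityMeasure μ]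
    (Z : V → Ω → ℝ) (hZ : ∀ v, Measurable (Z v))
    (hMF : MarkovFaithful E μ Z hZ)
    (Yk Yl : V) (hYk : Yk ∈ Ys) (hYl : Yl ∈ Ys) (hne : Yk ≠ Yl)
    (S : Set V) (hS : S ⊆ Ys \ {Yk, Yl})
    (hcd : ¬ CondIndepGiven μ Z hZ S Yk Yl)
    (hci : CondIndepGiven μ Z hZ (S ∪ Xs) Yk Yl) :
    ¬ ∃ E' : V → V → Prop, Irreflexive E' ∧ Acyclic E' ∧
      (∀ x ∈ Xs, ∀ y ∈ Ys, ¬ E' x y) ∧ MarkovFaithful E' μ Z hZ := by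
  obtain rfl : Xsᶜ = Ys := (IsCompl.of_le hdisj.le_bot hcover.ge).compl_eq
  rintro ⟨E', -, -, hE', hMF'⟩
  exact stmt_7_general (fun y hy x hx => hE' x hx y hy) μ Z hZ hYk hYl hne hS hcd hci hMF'

end VecCI
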